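/- arXiv:2209.04058 — 2 statements merged into one kernel-verified Lean document; each statement's English description precedes it below -/
import Mathlib

section
/- Let A be a monotone allocation rule, let p be an instance with allocation x = A(p), and let p' be an instance that agrees with p on the processing times of all machines other than i, and satisfies p'(i,j) > p(i,j) for every job j with x(i,j) = 0 and p'(i,j) < p(i,j) for every job j with x(i,j) = 1. Then the allocation x' = A(p') satisfies x'(i,j) = x(i,j) for every job j. -/
open scoped Classical
noncomputable section
variable {n m : ℕ}

/-- An allocation rule is monotone if, for every machine `i` and every two instances agreeing
outside machine `i`, the inner product of the change in `i`'s allocation with the change in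
`i`'s processing times is nonpositive. -/
def MonotoneAlloc (A : (Fin n → Fin m → ℝ) → (Fin m → Fin n)) : Prop :=
  ∀ (i : Fin n) (p p' : Fin n → Fin m → ℝ),
    (∀ i' j, 0 < p i' j) → (∀ i' j, 0 < p' i' j) →
    (∀ i' j, i' ≠ i → p i' j = p' i' j) →
    ∑ j, ((if A p j = i then (1 : ℝ) else 0) - (if A p' j = i then (1 : ℝ) else 0)) *
      (p i j - p' i j) ≤ 0

/-!
The sign conditions make the monotonicity sum equal to the sum of `|p i j - p' i j|` over the jobs
`j` that machine `i` gains or loses. These terms are strictly positive and the sum is nonpositive,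
so no such job exists.
-/

section IndicatorDifference

variable {R : Type*} [Ring R] [LinearOrder R] [IsOrderedAddMonoid R]

theorem ite_sub_ite_mul_eq_ite_abs {P Q : Prop} [Decidable P] [Decidable Q] {d : R}
    (hpos : P → 0 < d) (hneg : ¬P → d < 0) :
    ((if P then (1 : R) else 0) - (if Q then (1 : R) else 0)) * d =
      if (Q ↔ P) then 0 else |d| := by
  by_cases hP : P
  · by_cases hQ : Q <;> simp [hP, hQ, abs_of_pos (hpos hP)]
  · by_cases hQ : Q <;> simp [hP, hQ, abs_of_neg (hneg hP)]

variable {ι : Type*} {s : Finset ι} {P Q : ι → Prop} [DecidablePred P] [DecidablePred Q]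
  {d : ι → R}

theorem sum_ite_sub_ite_mul_eq_sum_abs
    (hpos : ∀ j ∈ s, P j → 0 < d j) (hneg : ∀ j ∈ s, ¬P j → d j < 0) :
    ∑ j ∈ s, ((if P j then (1 : R) else 0) - (if Q j then (1 : R) else 0)) * d j =
      ∑ j ∈ s with ¬(Q j ↔ P j), |d j| := by
  rw [Finset.sum_filter]
  refine Finset.sum_congr rfl fun j hj => ?_
  rw [ite_sub_ite_mul_eq_ite_abs (hpos j hj) (hneg j hj), ite_not]

theorem iff_of_sum_ite_sub_ite_mul_nonpos
    (hpos : ∀ j ∈ s, P j → 0 < d j) (hneg : ∀ j ∈ s, ¬P j → d j < 0)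
    (hsum : ∑ j ∈ s, ((if P j then (1 : R) else 0) - (if Q j then (1 : R) else 0)) * d j ≤ 0)
    {j : ι} (hj : j ∈ s) : Q j ↔ P j := by
  by_contra hdiff
  have hd_ne_zero : d j ≠ 0 := by
    by_cases hP : P j
    · exact (hpos j hj hP).ne'
    · exact (hneg j hj hP).ne
  have hsum_pos : 0 < ∑ k ∈ s with ¬(Q k ↔ P k), |d k| :=
    Finset.sum_pos' (fun k _ => abs_nonneg (d k))
      ⟨j, Finset.mem_filter.mpr ⟨hj, hdiff⟩, abs_pos.mpr hd_ne_zero⟩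
  rw [sum_ite_sub_ite_mul_eq_sum_abs hpos hneg] at hsum
  exact hsum.not_gt hsum_pos

end IndicatorDifference

/-- Let `A` be a monotone allocation rule, and let `p'` agree with `p` on all
machines other than `i`, with `p'(i,j) > p(i,j)` for every job `j` not assigned to `i` by
`A(p)` and `p'(i,j) < p(i,j)` for every job `j` assigned to `i` by `A(p)`. Then `A(p')` agrees
with `A(p)` on machine `i`'s row. -/
theorem monotone_allocation_stable
    (A : (Fin n → Fin m → ℝ) → (Fin m → Fin n)) (hmono : MonotoneAlloc A)
    (i : Fin n) (p p' : Fin n → Fin m → ℝ)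
    (hp : ∀ i' j, 0 < p i' j) (hp' : ∀ i' j, 0 < p' i' j)
    (hagree : ∀ i' j, i' ≠ i → p i' j = p' i' j)
    (hup : ∀ j, A p j ≠ i → p i j < p' i j)
    (hdown : ∀ j, A p j = i → p' i j < p i j) :
    ∀ j, (A p' j = i ↔ A p j = i) := by
  have hsum := hmono i p p' hp hp' hagree
  have hpos : ∀ j ∈ Finset.univ, A p j = i → 0 < p i j - p' i j :=
    fun j _ hj => sub_pos.mpr (hdown j hj)
  have hneg : ∀ j ∈ Finset.univ, A p j ≠ i → p i j - p' i j < 0 :=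
    fun j _ hj => sub_neg.mpr (hup j hj)
  exact fun j => iff_of_sum_ite_sub_ite_mul_nonpos hpos hneg hsum (Finset.mem_univ j)
end
end

section
/- No deterministic strategyproof scheduling mechanism with 1-consistency can achieve any bounded robustness. Formally, for n = 2 machines and m = 2 jobs, let (p, p̂) ↦ x(p, p̂) be a deterministic allocation rule such that for every fixed prediction p̂ the rule p ↦ x(p, p̂) is monotone (so the mechanism is strategyproof), and which is 1-consistent, i.e., MS(p, x(p, p)) = OPT(p) for every instance p. Then for every β ≥ 1 there exist instances p and p̂ such that MS(p, x(p, p̂)) > β·OPT(p). -/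
open scoped Classical
noncomputable section
variable {n m : ℕ}

/-- The makespan of allocation `a` under instance `p`. -/
def MS [NeZero n] (p : Fin n → Fin m → ℝ) (a : Fin m → Fin n) : ℝ :=
  Finset.univ.sup' Finset.univ_nonempty fun i => ∑ j, if a j = i then p i j else 0

/-- The optimal makespan of instance `p`. -/
def OPT [NeZero n] (p : Fin n → Fin m → ℝ) : ℝ :=
  Finset.univ.inf' Finset.univ_nonempty fun a : Fin m → Fin n => MS p a

/-!
Fix a machine `i₀` and a job `j₀`. In the prediction, `j₀` is cheaper on `i₀` than anywhere else,
and serving `j₀` on `i₀` already uses up the optimal makespan, so a 1-consistent rule gives `i₀`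
the job `j₀` and nothing more. Machine `i₀` now reports a smaller time for `j₀` and slightly larger
times for the other jobs. By monotonicity `i₀` still receives only `j₀`, so some other machine
processes a job of length `L`, although `i₀` could process all jobs in time `2 * m`. Letting `L`
grow makes the ratio unbounded.
-/

/-- The total processing time of the jobs that allocation `a` assigns to machine `i`. -/
def load (p : Fin n → Fin m → ℝ) (a : Fin m → Fin n) (i : Fin n) : ℝ :=
  ∑ j, if a j = i then p i j else 0

section Makespan

variable {p : Fin n → Fin m → ℝ} {a : Fin m → Fin n}

theorem sum_le_load {i : Fin n} (hp : ∀ j, 0 ≤ p i j) {S : Finset (Fin m)}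
    (hS : ∀ j ∈ S, a j = i) : ∑ j ∈ S, p i j ≤ load p a i := by
  rw [load, ← Finset.sum_filter]
  refine Finset.sum_le_sum_of_subset_of_nonneg (fun j hj => ?_) fun j _ _ => hp j
  exact Finset.mem_filter.2 ⟨Finset.mem_univ j, hS j hj⟩

variable [NeZero n]

theorem MS_le_iff {c : ℝ} : MS p a ≤ c ↔ ∀ i, load p a i ≤ c := by
  simp [MS, load, Finset.sup'_le_iff]

theorem load_le_MS (i : Fin n) : load p a i ≤ MS p a :=
  MS_le_iff.1 le_rfl i

theorem OPT_le_MS (p : Fin n → Fin m → ℝ) (a : Fin m → Fin n) : OPT p ≤ MS p a :=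
  Finset.inf'_le _ (Finset.mem_univ a)

theorem OPT_le_sum {i : Fin n} (hp : ∀ j, 0 ≤ p i j) : OPT p ≤ ∑ j, p i j := by
  refine (OPT_le_MS p fun _ => i).trans (MS_le_iff.2 fun i' => ?_)
  obtain rfl | hi := eq_or_ne i i'
  · simp [load]
  · simpa [load, hi] using Finset.sum_nonneg fun j _ => hp j

end Makespan

theorem MonotoneAlloc.update_eq_iff {A : (Fin n → Fin m → ℝ) → (Fin m → Fin n)}
    (hA : MonotoneAlloc A) {p : Fin n → Fin m → ℝ} (hp : ∀ i j, 0 < p i j)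
    {i : Fin n} {r : Fin m → ℝ} (hr : ∀ j, 0 < r j)
    (decrease : ∀ j, A p j = i → r j < p i j) (increase : ∀ j, A p j ≠ i → p i j < r j)
    (j : Fin m) : A (Function.update p i r) j = i ↔ A p j = i := by
  have hp' : ∀ i' j, 0 < Function.update p i r i' j := by
    intro i' j
    obtain rfl | hi := eq_or_ne i' i
    · simpa using hr j
    · simpa [hi] using hp i' j
  have sum_nonpos := hA i p (Function.update p i r) hp hp'
    fun i' j hi => by rw [Function.update_of_ne hi]
  simp only [Function.update_self] at sum_nonpos
  have term_nonneg : ∀ j, 0 ≤ ((if A p j = i then (1 : ℝ) else 0) -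
      (if A (Function.update p i r) j = i then (1 : ℝ) else 0)) * (p i j - r j) := by
    intro j
    by_cases hj : A p j = i
    · refine mul_nonneg ?_ (sub_nonneg.2 (decrease j hj).le)
      split_ifs <;> norm_num
    · refine mul_nonneg_of_nonpos_of_nonpos ?_ (sub_nonpos.2 (increase j hj).le)
      split_ifs <;> norm_num
  have term_eq_zero := (Finset.sum_eq_zero_iff_of_nonneg fun j _ => term_nonneg j).1
    (sum_nonpos.antisymm (Finset.sum_nonneg fun j _ => term_nonneg j)) j (Finset.mem_univ j)
  have time_ne : p i j - r j ≠ 0 := by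
    by_cases hj : A p j = i
    · exact (sub_pos.2 (decrease j hj)).ne'
    · exact (sub_neg.2 (increase j hj)).ne
  have indicator_eq := sub_eq_zero.1 ((mul_eq_zero.1 term_eq_zero).resolve_right time_ne)
  split_ifs at indicator_eq <;> simp_all

/-- The prediction of the lower bound: job `j₀` is meant for machine `i₀`, which could also process
the other jobs almost for free, while these take time `L` each on the other machines. -/
def predictedInstance (i₀ : Fin n) (j₀ : Fin m) (L : ℝ) (i : Fin n) (j : Fin m) : ℝ :=
  if i = i₀ then (if j = j₀ then m * L else 1) else if j = j₀ then 2 * (m * L) else L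

/-- The times reported by machine `i₀` in the lower bound: compared with `predictedInstance`, job
`j₀` gets shorter and every other job gets longer. -/
def reportedTimes (j₀ j : Fin m) : ℝ :=
  if j = j₀ then 1 else 2

/-- The true instance of the lower bound: `predictedInstance` with the row of `i₀` replaced by
`reportedTimes`. -/
def reportedInstance (i₀ : Fin n) (j₀ : Fin m) (L : ℝ) : Fin n → Fin m → ℝ :=
  Function.update (predictedInstance i₀ j₀ L) i₀ (reportedTimes j₀)

section LowerBound

variable {i₀ : Fin n} {j₀ : Fin m} {L : ℝ}

theorem le_natCast_mul (hm : 0 < m) (hL : 0 ≤ L) : L ≤ m * L :=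
  le_mul_of_one_le_left hL (mod_cast hm)

theorem predictedInstance_pos (hL : 0 < L) (i : Fin n) (j : Fin m) :
    0 < predictedInstance i₀ j₀ L i j := by
  have hmL := hL.trans_le (le_natCast_mul j₀.pos hL.le)
  unfold predictedInstance
  split_ifs <;> positivity

theorem reportedTimes_pos (j : Fin m) : 0 < reportedTimes j₀ j := by
  unfold reportedTimes
  split_ifs <;> norm_num

theorem reportedInstance_pos (hL : 0 < L) (i : Fin n) (j : Fin m) :
    0 < reportedInstance i₀ j₀ L i j := by
  obtain rfl | hi := eq_or_ne i i₀
  · simpa [reportedInstance] using reportedTimes_pos j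
  · simpa [reportedInstance, hi] using predictedInstance_pos hL i j

variable [NeZero n]

theorem OPT_predictedInstance_le (hn : 2 ≤ n) (hL : 0 ≤ L) :
    OPT (predictedInstance i₀ j₀ L) ≤ m * L := by
  have : Nontrivial (Fin n) := Fin.nontrivial_iff_two_le.2 hn
  obtain ⟨i₁, hi₁⟩ := exists_ne i₀
  refine (OPT_le_MS _ fun j => if j = j₀ then i₀ else i₁).trans (MS_le_iff.2 fun i => ?_)
  obtain rfl | hi := eq_or_ne i i₀
  · have job_iff : ∀ j, (if j = j₀ then i else i₁) = i ↔ j = j₀ := fun j => by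
      split_ifs with hj <;> simp [hj, hi₁]
    simp [load, job_iff, predictedInstance]
  · have term_le : ∀ j, (if (if j = j₀ then i₀ else i₁) = i
        then predictedInstance i₀ j₀ L i j else 0) ≤ L := fun j => by
      by_cases hj : j = j₀
      · simpa [hj, hi.symm] using hL
      · simp only [hj, if_false, predictedInstance, hi]
        split_ifs
        exacts [le_rfl, hL]
    simpa [load] using Finset.sum_le_card_nsmul Finset.univ _ L fun j _ => term_le j

theorem eq_iff_of_MS_predictedInstance_le {a : Fin m → Fin n} (hL : 0 < L)
    (ha : MS (predictedInstance i₀ j₀ L) a ≤ m * L) (j : Fin m) : a j = i₀ ↔ j = j₀ := by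
  have sum_le : ∀ i (S : Finset (Fin m)), (∀ j ∈ S, a j = i) →
      ∑ j ∈ S, predictedInstance i₀ j₀ L i j ≤ m * L := fun i S hS =>
    (sum_le_load (fun j => (predictedInstance_pos hL i j).le) hS).trans (MS_le_iff.1 ha i)
  have hj₀ : a j₀ = i₀ := by
    by_contra hne
    have hle := sum_le (a j₀) {j₀} (by simp)
    simp only [Finset.sum_singleton, predictedInstance, hne, if_false, if_true] at hle
    linarith [hL.trans_le (le_natCast_mul j₀.pos hL.le)]
  refine ⟨fun hj => ?_, fun hj => hj ▸ hj₀⟩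
  by_contra hne
  have hle := sum_le i₀ {j₀, j} (by simp [hj₀, hj])
  rw [Finset.sum_pair (Ne.symm hne)] at hle
  simp only [predictedInstance, hne, if_false, if_true] at hle
  linarith

theorem OPT_reportedInstance_le : OPT (reportedInstance i₀ j₀ L) ≤ 2 * m := by
  have row_eq : reportedInstance i₀ j₀ L i₀ = reportedTimes j₀ := Function.update_self ..
  have time_le : ∀ j, reportedTimes j₀ j ≤ 2 := fun j => by
    unfold reportedTimes
    split_ifs <;> norm_num
  calc OPT (reportedInstance i₀ j₀ L)
      ≤ ∑ j, reportedTimes j₀ j :=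
        row_eq ▸ OPT_le_sum fun j => by rw [row_eq]; exact (reportedTimes_pos j).le
    _ ≤ m * 2 := by
        simpa using Finset.sum_le_card_nsmul Finset.univ _ 2 fun j _ => time_le j
    _ = 2 * m := mul_comm _ _

theorem reportedInstance_alloc_eq_iff {A : (Fin n → Fin m → ℝ) → (Fin m → Fin n)}
    (hA : MonotoneAlloc A) (hn : 2 ≤ n) (hL : 1 < L)
    (hopt : MS (predictedInstance i₀ j₀ L) (A (predictedInstance i₀ j₀ L)) =
      OPT (predictedInstance i₀ j₀ L)) (j : Fin m) :
    A (reportedInstance i₀ j₀ L) j = i₀ ↔ j = j₀ := by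
  have hL₀ : 0 < L := zero_lt_one.trans hL
  have alloc_iff := eq_iff_of_MS_predictedInstance_le hL₀
    (hopt.trans_le (OPT_predictedInstance_le hn hL₀.le))
  refine (hA.update_eq_iff (predictedInstance_pos hL₀) reportedTimes_pos ?_ ?_ j).trans
    (alloc_iff j)
  · intro j hj
    simpa [reportedTimes, predictedInstance, (alloc_iff j).1 hj] using
      hL.trans_le (le_natCast_mul j₀.pos hL₀.le)
  · intro j hj
    simp [reportedTimes, predictedInstance, mt (alloc_iff j).2 hj]

theorem le_MS_reportedInstance {a : Fin m → Fin n} (hm : 2 ≤ m) (hL : 0 < L)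
    (ha : ∀ j, a j = i₀ ↔ j = j₀) : L ≤ MS (reportedInstance i₀ j₀ L) a := by
  have : Nontrivial (Fin m) := Fin.nontrivial_iff_two_le.2 hm
  obtain ⟨j₁, hj₁⟩ := exists_ne j₀
  have hi₁ : a j₁ ≠ i₀ := mt (ha j₁).1 hj₁
  calc L = ∑ j ∈ {j₁}, reportedInstance i₀ j₀ L (a j₁) j := by
        simp [reportedInstance, predictedInstance, hi₁, hj₁]
    _ ≤ load (reportedInstance i₀ j₀ L) a (a j₁) :=
        sum_le_load (fun j => (reportedInstance_pos hL _ j).le) (by simp)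
    _ ≤ MS (reportedInstance i₀ j₀ L) a := load_le_MS _

end LowerBound

theorem one_consistent_unbounded_robustness_general [NeZero n] (hn : 2 ≤ n) (hm : 2 ≤ m)
    (x : (Fin n → Fin m → ℝ) → (Fin n → Fin m → ℝ) → (Fin m → Fin n))
    (hmono : ∀ phat : Fin n → Fin m → ℝ, (∀ i j, 0 < phat i j) →
      MonotoneAlloc (fun p => x p phat))
    (hcons : ∀ p : Fin n → Fin m → ℝ, (∀ i j, 0 < p i j) → MS p (x p p) = OPT p)
    (β : ℝ) (hβ : 1 ≤ β) : ∃ p phat : Fin n → Fin m → ℝ,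
      (∀ i j, 0 < p i j) ∧ (∀ i j, 0 < phat i j) ∧ β * OPT p < MS p (x p phat) := by
  let i₀ : Fin n := 0
  let j₀ : Fin m := ⟨0, by lia⟩
  let L : ℝ := β * (2 * m) + 1
  have hL : 1 < L := lt_add_of_pos_left _ (by positivity)
  have hL₀ : 0 < L := zero_lt_one.trans hL
  have phat_pos := predictedInstance_pos (i₀ := i₀) (j₀ := j₀) hL₀
  refine ⟨reportedInstance i₀ j₀ L, predictedInstance i₀ j₀ L,
    reportedInstance_pos hL₀, phat_pos, ?_⟩
  have alloc_iff := reportedInstance_alloc_eq_iff (hmono _ phat_pos) hn hL (hcons _ phat_pos)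
  calc β * OPT (reportedInstance i₀ j₀ L)
      ≤ β * (2 * m) := by gcongr; exact OPT_reportedInstance_le
    _ < L := lt_add_one _
    _ ≤ MS (reportedInstance i₀ j₀ L) (x (reportedInstance i₀ j₀ L) (predictedInstance i₀ j₀ L)) :=
        le_MS_reportedInstance hm hL₀ alloc_iff

/-- No deterministic strategyproof scheduling mechanism with predictions
that is `1`-consistent can achieve any bounded robustness: for `n = m = 2`, if `x(·, p̂)` is
monotone for every prediction `p̂` (so the mechanism is strategyproof) and
`MS(p, x(p,p)) = OPT(p)` for every `p` (1-consistency), then for every `β ≥ 1` there are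
instances `p, p̂` with `MS(p, x(p,p̂)) > β·OPT(p)`. -/
theorem one_consistent_unbounded_robustness
    (x : (Fin 2 → Fin 2 → ℝ) → (Fin 2 → Fin 2 → ℝ) → (Fin 2 → Fin 2))
    (hmono : ∀ phat : Fin 2 → Fin 2 → ℝ, (∀ i j, 0 < phat i j) →
      MonotoneAlloc (fun p => x p phat))
    (hcons : ∀ p : Fin 2 → Fin 2 → ℝ, (∀ i j, 0 < p i j) → MS p (x p p) = OPT p) :
    ∀ β : ℝ, 1 ≤ β → ∃ p phat : Fin 2 → Fin 2 → ℝ,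
      (∀ i j, 0 < p i j) ∧ (∀ i j, 0 < phat i j) ∧
      β * OPT p < MS p (x p phat) :=
  one_consistent_unbounded_robustness_general le_rfl le_rfl x hmono hcons
end
end
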